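/- Let 𝓕 be a finite nonempty union-closed family of finite sets with ∅ ∉ 𝓕, let k be the size of a smallest set of 𝓕 and n the size of the largest set of 𝓕, and let f be the number of abundant elements for 𝓕. If k = n − 4, then f ≥ k − 1. -/

import Mathlib

/-- A family of finite sets (of naturals) is union-closed. -/
def UnionClosed (F : Finset (Finset ℕ)) : Prop :=
  ∀ A ∈ F, ∀ B ∈ F, A ∪ B ∈ F

/-- An element `x` is abundant for `F` if it belongs to more than half of the sets of `F`. -/
def Abundant (F : Finset (Finset ℕ)) (x : ℕ) : Prop :=
  2 * (F.filter (fun A => x ∈ A)).card > F.card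

instance (F : Finset (Finset ℕ)) : DecidablePred (Abundant F) := fun x =>
  inferInstanceAs (Decidable (2 * (F.filter (fun A => x ∈ A)).card > F.card))

/-- `F` is twin-free: for every two distinct elements of the union of all its sets,
some set of `F` contains exactly one of them. -/
def TwinFree (F : Finset (Finset ℕ)) : Prop :=
  ∀ a ∈ F.sup id, ∀ b ∈ F.sup id, a ≠ b → ∃ A ∈ F, (A ∩ {a, b}).card = 1

/-- `F` is an `(f,k,n)`-construction: it is a nonempty union-closed family with exactly `f`
abundant elements, a smallest set of size `k`, and the largest set (the union) of size `n`. -/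
def IsConstruction (F : Finset (Finset ℕ)) (f k n : ℕ) : Prop :=
  F.Nonempty ∧ UnionClosed F ∧
  ((F.sup id).filter (Abundant F)).card = f ∧
  (∃ S ∈ F, S.card = k) ∧ (∀ A ∈ F, k ≤ A.card) ∧
  (F.sup id).card = n

/-!
Taking complements in the union of the family turns the claim into: if a family `G` of sets with at
most four elements is closed under intersection and contains `∅`, then at most five elements lie in
at least half of its members. Suppose that six elements do, and let `M` be the set of these. Summing
`2 * #(M ∩ A) - 6` over the members `A` gives a nonnegative number, and the only positive summands
come from the members `M \ {u, v}`, each of which contributes `2`. They form a graph with, say, `e`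
edges on `M`, so members of `G` other than these can fall short of three elements by at most `e` in
total.

On the other hand, edges produce small members. The set `core` of isolated vertices is a member
unless `M` itself is the core, and for each other vertex `v` the set `insert v core` is a member
unless `v` is the only neighbour of some leaf. Hence, if `s` of these sets are members and `m`
vertices are not isolated, the sum of the degrees is at most `(m - s) + s * (m - 1)`.

* If there is no isolated vertex, the members `∅`, `s` singletons and a pair give
  `6 + 4 * s + 2 ≤ 2 * e ≤ 6 + 4 * s`.
* If `a` is the only one, the same count on `M \ {a}` yields a member `S` with `a ∉ S` and three
  elements in `M`. A coedge meets `S` in a member with one or two elements, and together with `∅`,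
  `{a}` and the `s` pairs `{a, v}` this gives `6 + 4 + 2 * s + 2 ≤ 2 * e ≤ 5 + 3 * s` with `s ≤ 5`.
* If there are two, the count on `M` without them yields a member `S` that avoids both and has three
  elements in `M`. Now the coedges meet `S` in distinct members with one or two elements, and
  together with `∅` this gives `6 + 2 * e ≤ 2 * e`.
-/

open Finset

theorem eq_of_subset_of_card_eq_of_card_le_succ {α : Type*} {P Q X Y : Finset α}
    (hPX : P ⊆ X) (hPY : P ⊆ Y) (hXQ : X ⊆ Q) (hYQ : Y ⊆ Q) (hPQ : #Q ≤ #P + 1)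
    (hXY : #X = #Y) : X = Y := by
  rcases le_or_gt #X #P with hX | hX
  · exact (eq_of_subset_of_card_le hPX hX).symm.trans (eq_of_subset_of_card_le hPY (hXY ▸ hX))
  · exact (eq_of_subset_of_card_le hXQ (by omega)).trans
      (eq_of_subset_of_card_le hYQ (by omega)).symm

section

variable {α : Type*} [DecidableEq α] {G : Finset (Finset α)} {M A P W : Finset α} {u v : α}

theorem mem_of_forall_exists_notMem (hG : InfClosed (G : Set (Finset α))) (hW : W ∈ G)
    (hPW : P ⊆ W) (hsep : ∀ v ∈ W \ P, ∃ A ∈ G, P ⊆ A ∧ v ∉ A) : P ∈ G := by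
  have hne : {A ∈ G | P ⊆ A}.Nonempty := ⟨W, mem_filter.2 ⟨hW, hPW⟩⟩
  have hmem : {A ∈ G | P ⊆ A}.inf' hne id ∈ (G : Set (Finset α)) :=
    inf'_mem _ (fun _ hA _ hB => hG hA hB) _ hne _ fun A hA => (mem_filter.1 hA).1
  have hle {A : Finset α} (hA : A ∈ G) (hPA : P ⊆ A) : {A ∈ G | P ⊆ A}.inf' hne id ⊆ A :=
    inf'_le id (mem_filter.2 ⟨hA, hPA⟩)
  suffices {A ∈ G | P ⊆ A}.inf' hne id = P from this ▸ hmem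
  refine Subset.antisymm (fun v hv => ?_) (le_inf' hne id fun A hA => (mem_filter.1 hA).2)
  by_contra hvP
  obtain ⟨A, hA, hPA, hvA⟩ := hsep v (mem_sdiff.2 ⟨hle hW hPW hv, hvP⟩)
  exact hvA (hle hA hPA hv)

/-- The members of `G` of the form `M \ {u, v}` with `u ≠ v` in `M`. They are the edges `uv` of a
graph on `M`, encoded by the complements of the edges; when `#M = 6` and all members of `G` have at
most four elements, they are the only members with more than half of the elements of `M`. -/
def coedges (G : Finset (Finset α)) (M : Finset α) : Finset (Finset α) :=
  {A ∈ G | A ⊆ M ∧ #(M \ A) = 2}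

/-- The elements of `M` common to all coedges, that is, the isolated vertices of the graph. -/
def core (G : Finset (Finset α)) (M : Finset α) : Finset α :=
  {x ∈ M | ∀ A ∈ coedges G M, x ∈ A}

/-- The non-isolated vertices `v` for which `core G M` extended by `v` is a member of `G`. Having
few of them forces the graph to have few edges, having many of them gives `G` many small members. -/
def coreExtensions (G : Finset (Finset α)) (M : Finset α) : Finset α :=
  {v ∈ M \ core G M | insert v (core G M) ∈ G}

theorem mem_coedges : A ∈ coedges G M ↔ A ∈ G ∧ A ⊆ M ∧ #(M \ A) = 2 :=
  mem_filter

theorem coedges_subset : coedges G M ⊆ G :=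
  filter_subset _ _

theorem core_subset : core G M ⊆ M :=
  filter_subset _ _

theorem coreExtensions_subset : coreExtensions G M ⊆ M \ core G M :=
  filter_subset _ _

theorem core_subset_of_mem_coedges (hA : A ∈ coedges G M) : core G M ⊆ A :=
  fun _ hx => (mem_filter.1 hx).2 A hA

theorem exists_coedge_notMem (hv : v ∈ M \ core G M) : ∃ A ∈ coedges G M, v ∉ A := by
  obtain ⟨hvM, hvC⟩ := mem_sdiff.1 hv
  by_contra! hall
  exact hvC (mem_filter.2 ⟨hvM, hall⟩)

theorem mem_sdiff_core_of_notMem_coedge (hA : A ∈ coedges G M) (hv : v ∈ M \ A) :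
    v ∈ M \ core G M :=
  sdiff_subset_sdiff Subset.rfl (core_subset_of_mem_coedges hA) hv

theorem exists_sdiff_coedge_eq_pair (hA : A ∈ coedges G M) (hv : v ∈ M \ A) :
    ∃ u ∈ M \ A, u ≠ v ∧ A = M \ {u, v} := by
  obtain ⟨-, hAM, hA2⟩ := mem_coedges.1 hA
  obtain ⟨u, hu, huv⟩ := exists_mem_ne (by omega : 1 < #(M \ A)) v
  refine ⟨u, hu, huv, ?_⟩
  have hpair : {u, v} = M \ A := eq_of_subset_of_card_le
    (insert_subset hu (singleton_subset_iff.2 hv)) (by rw [hA2, card_pair huv])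
  rw [hpair, Finset.sdiff_sdiff_eq_self hAM]

theorem coedge_eq_sdiff_pair (hA : A ∈ coedges G M) (hu : u ∈ M \ A) (hv : v ∈ M \ A)
    (huv : u ≠ v) : A = M \ {u, v} := by
  obtain ⟨w, -, -, rfl⟩ := exists_sdiff_coedge_eq_pair hA hv
  have : u ∈ ({w, v} : Finset α) := by
    by_contra hu'
    exact (mem_sdiff.1 hu).2 (mem_sdiff.2 ⟨(mem_sdiff.1 hu).1, hu'⟩)
  obtain rfl : u = w := by simpa [huv] using this
  rfl

theorem core_mem (hG : InfClosed (G : Set (Finset α))) (hM : (coedges G M).Nonempty) :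
    core G M ∈ G := by
  obtain ⟨W, hW⟩ := hM
  refine mem_of_forall_exists_notMem hG (coedges_subset hW) (core_subset_of_mem_coedges hW)
    fun v hv => ?_
  have hWM : W ⊆ M := (mem_coedges.1 hW).2.1
  obtain ⟨A, hA, hvA⟩ := exists_coedge_notMem (sdiff_subset_sdiff hWM Subset.rfl hv)
  exact ⟨A, coedges_subset hA, core_subset_of_mem_coedges hA, hvA⟩

/-- If every other non-isolated vertex has an edge that avoids `v`, then the coedges of these edges
intersect in `insert v (core G M)`; otherwise some vertex has `v` as its only neighbour. -/
theorem exists_leaf_of_insert_core_notMem (hG : InfClosed (G : Set (Finset α)))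
    (hv : v ∈ M \ core G M) (hvG : insert v (core G M) ∉ G) :
    ∃ u ∈ M \ core G M, u ≠ v ∧ ∀ A ∈ coedges G M, u ∉ A → v ∉ A := by
  by_contra! hsep
  obtain ⟨A, hA, hvA⟩ := exists_coedge_notMem hv
  obtain ⟨u, hu, huv, -⟩ := exists_sdiff_coedge_eq_pair hA (mem_sdiff.2 ⟨(mem_sdiff.1 hv).1, hvA⟩)
  obtain ⟨W, hW, -, hvW⟩ := hsep u (mem_sdiff_core_of_notMem_coedge hA hu) huv
  refine hvG (mem_of_forall_exists_notMem hG (coedges_subset hW)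
    (insert_subset hvW (core_subset_of_mem_coedges hW)) fun x hx => ?_)
  obtain ⟨hxW, hxP⟩ := mem_sdiff.1 hx
  rw [mem_insert, not_or] at hxP
  have hxM : x ∈ M := (mem_coedges.1 hW).2.1 hxW
  obtain ⟨B, hB, hxB, hvB⟩ := hsep x (mem_sdiff.2 ⟨hxM, hxP.2⟩) hxP.1
  exact ⟨B, coedges_subset hB, insert_subset hvB (core_subset_of_mem_coedges hB), hxB⟩

theorem card_filter_notMem_coedges_le (hv : v ∈ M \ core G M) :
    #{A ∈ coedges G M | v ∉ A} ≤ #(M \ core G M) - 1 := by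
  rw [← card_erase_of_mem hv]
  refine (card_le_card fun A hA => ?_).trans
    (card_image_le (f := fun u => M \ {u, v}) (s := (M \ core G M).erase v))
  obtain ⟨hA, hvA⟩ := mem_filter.1 hA
  obtain ⟨u, hu, huv, hAuv⟩ :=
    exists_sdiff_coedge_eq_pair hA (mem_sdiff.2 ⟨(mem_sdiff.1 hv).1, hvA⟩)
  exact mem_image.2
    ⟨u, mem_erase.2 ⟨huv, mem_sdiff_core_of_notMem_coedge hA hu⟩, hAuv.symm⟩

theorem card_filter_notMem_coedges_le_one (hu : u ∈ M) (hv : v ∈ M) (huv : u ≠ v)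
    (hleaf : ∀ A ∈ coedges G M, u ∉ A → v ∉ A) : #{A ∈ coedges G M | u ∉ A} ≤ 1 := by
  have heq : ∀ A ∈ {A ∈ coedges G M | u ∉ A}, A = M \ {u, v} := fun A hA => by
    obtain ⟨hA, huA⟩ := mem_filter.1 hA
    exact coedge_eq_sdiff_pair hA (mem_sdiff.2 ⟨hu, huA⟩)
      (mem_sdiff.2 ⟨hv, hleaf A hA huA⟩) huv
  exact card_le_one.2 fun A hA B hB => (heq A hA).trans (heq B hB).symm

theorem sum_card_filter_notMem_coedges :
    ∑ v ∈ M \ core G M, #{A ∈ coedges G M | v ∉ A} = 2 * #(coedges G M) := by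
  have hcount := sum_card_bipartiteAbove_eq_sum_card_bipartiteBelow
    (s := M \ core G M) (t := coedges G M) (fun v A => v ∉ A)
  refine hcount.trans ((sum_congr rfl fun A hA => ?_).trans
    (by rw [sum_const, smul_eq_mul, mul_comm] : ∑ _ ∈ coedges G M, 2 = 2 * #(coedges G M)))
  rw [← (mem_coedges.1 hA).2.2]
  congr 1
  ext v
  simp only [mem_bipartiteBelow, mem_sdiff]
  exact ⟨fun h => ⟨h.1.1, h.2⟩, fun h => ⟨⟨h.1, fun hC => h.2
    (core_subset_of_mem_coedges hA hC)⟩, h.2⟩⟩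

theorem exists_leaves (hG : InfClosed (G : Set (Finset α))) :
    ∃ L ⊆ M \ core G M, #L = #((M \ core G M) \ coreExtensions G M) ∧
      ∀ u ∈ L, #{A ∈ coedges G M | u ∉ A} ≤ 1 := by
  have hleaf : ∀ v ∈ (M \ core G M) \ coreExtensions G M, ∃ u ∈ M \ core G M,
      u ≠ v ∧ ∀ A ∈ coedges G M, u ∉ A → v ∉ A := fun v hv =>
    have hv' := mem_sdiff.1 hv
    exists_leaf_of_insert_core_notMem hG hv'.1 fun h => hv'.2 (mem_filter.2 ⟨hv'.1, h⟩)
  choose! leaf hmem hne honly using hleaf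
  refine ⟨((M \ core G M) \ coreExtensions G M).image leaf, image_subset_iff.2 hmem,
    card_image_of_injOn fun v hv v' hv' h => ?_, fun u hu => ?_⟩
  · obtain ⟨A, hA, hlA⟩ := exists_coedge_notMem (hmem v hv)
    have hA' := coedge_eq_sdiff_pair hA (mem_sdiff.2 ⟨(mem_sdiff.1 (hmem v hv)).1, hlA⟩)
      (mem_sdiff.2 ⟨(mem_sdiff.1 (mem_sdiff.1 hv).1).1, honly v hv A hA hlA⟩) (hne v hv)
    have hv'A : v' ∉ A := honly v' hv' A hA (h ▸ hlA)
    have hv'M : v' ∈ M := (mem_sdiff.1 (mem_sdiff.1 hv').1).1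
    have hv'l : v' ≠ leaf v := h ▸ (hne v' hv').symm
    rw [hA', mem_sdiff, not_and_not_right, mem_insert, mem_singleton] at hv'A
    exact ((hv'A hv'M).resolve_left hv'l).symm
  · obtain ⟨v, hv, rfl⟩ := mem_image.1 hu
    exact card_filter_notMem_coedges_le_one (mem_sdiff.1 (hmem v hv)).1
      (mem_sdiff.1 (mem_sdiff.1 hv).1).1 (hne v hv) (honly v hv)

theorem two_mul_card_coedges_add_le (hG : InfClosed (G : Set (Finset α))) :
    2 * #(coedges G M) + #(coreExtensions G M) ≤
      #(M \ core G M) + #(coreExtensions G M) * (#(M \ core G M) - 1) := by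
  obtain ⟨L, hLM, hL, hL1⟩ := exists_leaves (M := M) hG
  have hext := card_sdiff_add_card_eq_card (coreExtensions_subset (G := G) (M := M))
  have hrest : #((M \ core G M) \ L) = #(coreExtensions G M) := by
    have := card_sdiff_add_card_eq_card hLM
    omega
  have hleaves : ∑ u ∈ L, #{A ∈ coedges G M | u ∉ A} ≤ #L := by
    simpa using sum_le_card_nsmul L _ 1 hL1
  have hothers : ∑ u ∈ (M \ core G M) \ L, #{A ∈ coedges G M | u ∉ A} ≤
      #((M \ core G M) \ L) * (#(M \ core G M) - 1) :=
    sum_le_card_nsmul _ _ _ fun v hv => card_filter_notMem_coedges_le (sdiff_subset hv)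
  rw [← sum_card_filter_notMem_coedges, ← sum_sdiff hLM]
  rw [hrest] at hothers
  omega
theorem inter_eq_erase_of_mem_coedges {V : Finset α} (hW : W ∈ coedges G M) (hV : V ∈ coedges G M)
    (huW : u ∈ W) (huV : u ∉ V) (hne : #(M \ (W ∩ V)) ≠ 4) : W ∩ V = W.erase u := by
  obtain ⟨-, hWM, hW2⟩ := mem_coedges.1 hW
  have hunion := card_union_le (M \ W) (M \ V)
  rw [← sdiff_inter_distrib_right, hW2, (mem_coedges.1 hV).2.2] at hunion
  have hWcard := card_sdiff_add_card_eq_card hWM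
  have hWVcard := card_sdiff_add_card_eq_card (inter_subset_left.trans hWM : W ∩ V ⊆ M)
  have hsub : W ∩ V ⊆ W.erase u := subset_erase.2
    ⟨inter_subset_left, fun h => huV (mem_inter.1 h).2⟩
  refine eq_of_subset_of_card_le hsub ?_
  rw [card_erase_of_mem huW]
  omega

/-- If no two coedges meet in `#M - 4` elements, then the intersections of a coedge `W` with the
other ones are sets `W.erase x`, and two of these meet in `#M - 4` elements. -/
theorem exists_card_sdiff_eq_four (hG : InfClosed (G : Set (Finset α))) (hM : 4 ≤ #M)
    (hcore : core G M = ∅) : ∃ A ∈ G, A ⊆ M ∧ #(M \ A) = 4 := by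
  have hcoedge : ∀ x ∈ M, ∃ A ∈ coedges G M, x ∉ A := fun x hx =>
    exists_coedge_notMem (by rwa [hcore, sdiff_empty])
  obtain ⟨x₀, hx₀⟩ := card_pos.1 (by omega : 0 < #M)
  obtain ⟨W, hW, -⟩ := hcoedge x₀ hx₀
  obtain ⟨hWG, hWM, hW2⟩ := mem_coedges.1 hW
  have hWcard := card_sdiff_add_card_eq_card hWM
  by_contra! hno
  have herase : ∀ x ∈ W, W.erase x ∈ G := fun x hx => by
    obtain ⟨V, hV, hxV⟩ := hcoedge x (hWM hx)
    have hVG := coedges_subset hV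
    rw [← inter_eq_erase_of_mem_coedges hW hV hx hxV
      (hno (W ∩ V) (hG hWG hVG) (inter_subset_left.trans hWM))]
    exact hG hWG hVG
  obtain ⟨x, hx, y, hy, hxy⟩ := one_lt_card.1 (by omega : 1 < #W)
  have hsub : W.erase x ∩ W.erase y ⊆ M :=
    inter_subset_left.trans ((erase_subset x W).trans hWM)
  refine hno (W.erase x ∩ W.erase y) (hG (herase x hx) (herase y hy)) hsub ?_
  have hcard : #(W.erase x ∩ W.erase y) = #W - 1 - 1 := by
    rw [inter_erase, inter_eq_left.2 (erase_subset x W),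
      card_erase_of_mem (mem_erase.2 ⟨hxy.symm, hy⟩), card_erase_of_mem hx]
  have := card_sdiff_add_card_eq_card hsub
  omega

/-- `x` belongs to at least half of the members of `G`. Passing to complements turns the elements
that are not abundant into these. -/
def Frequent (G : Finset (Finset α)) (x : α) : Prop :=
  #G ≤ 2 * #{A ∈ G | x ∈ A}

theorem card_mul_card_le_of_frequent {N : Finset α} (hN : ∀ x ∈ N, Frequent G x) :
    #N * #G ≤ ∑ A ∈ G, 2 * #(N ∩ A) :=
  calc #N * #G = ∑ _ ∈ N, #G := by rw [sum_const, smul_eq_mul]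
    _ ≤ ∑ x ∈ N, 2 * #{A ∈ G | x ∈ A} := sum_le_sum hN
    _ = 2 * ∑ A ∈ G, #{x ∈ N | x ∈ A} := by
      rw [← mul_sum]
      exact congrArg _ (sum_card_bipartiteAbove_eq_sum_card_bipartiteBelow (· ∈ ·))
    _ = ∑ A ∈ G, 2 * #(N ∩ A) := by simp only [mul_sum, filter_mem_eq_inter]

/-- Subtraction is truncated, so the summands are the negative and the positive parts of
`2 * #(N ∩ A) - #N`, whose sum is nonnegative by double counting. -/
theorem sum_shortfall_le_sum_excess {N : Finset α} (hN : ∀ x ∈ N, Frequent G x) :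
    ∑ A ∈ G, (#N - 2 * #(N ∩ A)) ≤ ∑ A ∈ G, (2 * #(N ∩ A) - #N) := by
  have hbalance : ∑ A ∈ G, (#N - 2 * #(N ∩ A)) + ∑ A ∈ G, 2 * #(N ∩ A) =
      ∑ A ∈ G, (2 * #(N ∩ A) - #N) + #N * #G := by
    rw [mul_comm, ← smul_eq_mul, ← sum_const, ← sum_add_distrib, ← sum_add_distrib]
    exact sum_congr rfl fun A _ => by omega
  have := card_mul_card_le_of_frequent hN
  omega

theorem card_inter_lt_of_notMem_coedges {r : ℕ} (hM : #M = r + 2) (hA : A ∈ G) (hAr : #A ≤ r)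
    (hAc : A ∉ coedges G M) : #(M ∩ A) < r := by
  by_contra! hr
  have hAM : A ⊆ M := inter_eq_right.1 (eq_of_subset_of_card_le inter_subset_right (hAr.trans hr))
  have hcard := card_sdiff_add_card_eq_card hAM
  rw [inter_eq_right.2 hAM] at hr
  exact hAc (mem_coedges.2 ⟨hA, hAM, by omega⟩)

/-- Only coedges can exceed half of `M \ P`, and the excess of a coedge is
`2 * (4 - #P) - (6 - #P) = 2 - #P`. -/
theorem sum_shortfall_le_mul_card_coedges {D : Finset (Finset α)} (hM : #M = 6)
    (hfreq : ∀ x ∈ M, Frequent G x) (hP : P ⊆ core G M) (hD : D ⊆ G)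
    (hout : ∀ A ∈ G, A ∉ coedges G M → 2 * #((M \ P) ∩ A) ≤ 6 - #P) :
    ∑ A ∈ D, (6 - #P - 2 * #((M \ P) ∩ A)) ≤ (2 - #P) * #(coedges G M) := by
  have hN : #(M \ P) = 6 - #P := by
    rw [card_sdiff_of_subset (hP.trans core_subset), hM]
  have hexcess : ∀ A ∈ G, 2 * #((M \ P) ∩ A) - #(M \ P) ≤
      if A ∈ coedges G M then 2 - #P else 0 := fun A hA => by
    split_ifs with hAc
    · have hPA := hP.trans (core_subset_of_mem_coedges hAc)
      have hle : #((M \ P) ∩ A) ≤ #(A \ P) := card_le_card fun x hx =>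
        mem_sdiff.2 ⟨(mem_inter.1 hx).2, (mem_sdiff.1 (mem_inter.1 hx).1).2⟩
      obtain ⟨-, hAM, hA2⟩ := mem_coedges.1 hAc
      have := card_sdiff_add_card_eq_card hAM
      have := card_sdiff_add_card_eq_card hPA
      omega
    · have := hout A hA hAc
      omega
  calc ∑ A ∈ D, (6 - #P - 2 * #((M \ P) ∩ A))
      ≤ ∑ A ∈ G, (#(M \ P) - 2 * #((M \ P) ∩ A)) := by
        rw [hN]
        exact sum_le_sum_of_subset hD
    _ ≤ ∑ A ∈ G, (2 * #((M \ P) ∩ A) - #(M \ P)) :=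
        sum_shortfall_le_sum_excess fun x hx => hfreq x (mem_sdiff.1 hx).1
    _ ≤ ∑ A ∈ G, if A ∈ coedges G M then 2 - #P else 0 := sum_le_sum hexcess
    _ = (2 - #P) * #(coedges G M) := by
        rw [sum_ite_mem, inter_eq_right.2 coedges_subset, sum_const, smul_eq_mul, mul_comm]

theorem sum_shortfall_le_two_mul_card_coedges {D : Finset (Finset α)} (hM : #M = 6)
    (hG4 : ∀ A ∈ G, #A ≤ 4) (hfreq : ∀ x ∈ M, Frequent G x) (hD : D ⊆ G) :
    ∑ A ∈ D, (6 - 2 * #A) ≤ 2 * #(coedges G M) := by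
  have h := sum_shortfall_le_mul_card_coedges (P := ∅) hM hfreq (empty_subset _) hD
    fun A hA hAc => by
      have := card_inter_lt_of_notMem_coedges hM hA (hG4 A hA) hAc
      rw [sdiff_empty, card_empty]
      omega
  rw [sdiff_empty, card_empty] at h
  refine (sum_le_sum fun A _ => ?_).trans h
  have : #(M ∩ A) ≤ #A := card_le_card inter_subset_right
  omega

theorem exists_disjoint_card_inter_eq_three {D : Finset (Finset α)} (hM : #M = 6)
    (hG4 : ∀ A ∈ G, #A ≤ 4) (hfreq : ∀ x ∈ M, Frequent G x) (hP : P ⊆ core G M)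
    (hPcard : #P ≤ 2) (hD : D ⊆ G)
    (hlt : (2 - #P) * #(coedges G M) < ∑ A ∈ D, (6 - #P - 2 * #((M \ P) ∩ A))) :
    ∃ S ∈ G, Disjoint P S ∧ #(M ∩ S) = 3 := by
  obtain ⟨S, hS, hSc, hS3⟩ : ∃ S ∈ G, S ∉ coedges G M ∧ 6 - #P < 2 * #((M \ P) ∩ S) := by
    by_contra! hout
    exact hlt.not_ge (sum_shortfall_le_mul_card_coedges hM hfreq hP hD hout)
  have hMS := card_inter_lt_of_notMem_coedges hM hS (hG4 S hS) hSc
  have hsub : (M \ P) ∩ S ⊆ M ∩ S := inter_subset_inter_right sdiff_subset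
  have hle := card_le_card hsub
  have heq := eq_of_subset_of_card_le hsub (by omega)
  refine ⟨S, hS, disjoint_left.2 fun x hxP hxS => ?_, by omega⟩
  have hx : x ∈ M ∩ S := mem_inter.2 ⟨core_subset (hP hxP), hxS⟩
  rw [← heq] at hx
  exact (mem_sdiff.1 (mem_inter.1 hx).1).2 hxP

theorem image_insert_core_subset : (coreExtensions G M).image (insert · (core G M)) ⊆ G :=
  image_subset_iff.2 fun _ hv => (mem_filter.1 hv).2

theorem sum_image_insert_core (f : Finset α → ℕ) :
    ∑ A ∈ (coreExtensions G M).image (insert · (core G M)), f A =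
      ∑ v ∈ coreExtensions G M, f (insert v (core G M)) :=
  sum_image fun _ hv _ _ h => (insert_inj (mem_sdiff.1 (coreExtensions_subset hv)).2).1 h

theorem coedges_nonempty_of_core_ne (hM : core G M ≠ M) : (coedges G M).Nonempty := by
  obtain ⟨v, hv⟩ := sdiff_nonempty.2 fun h => hM (Subset.antisymm core_subset h)
  obtain ⟨A, hA, -⟩ := exists_coedge_notMem hv
  exact ⟨A, hA⟩

theorem core_ne_empty (hG : InfClosed (G : Set (Finset α))) (hM : #M = 6)
    (hG4 : ∀ A ∈ G, #A ≤ 4) (hfreq : ∀ x ∈ M, Frequent G x) : core G M ≠ ∅ := by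
  intro hcore
  have h0 : ∅ ∈ G := hcore ▸ core_mem hG (coedges_nonempty_of_core_ne (by
    rw [hcore]; rintro rfl; simp at hM))
  obtain ⟨Q, hQ, hQM, hQ4⟩ := exists_card_sdiff_eq_four hG (by omega) hcore
  have hQcard : #Q = 2 := by
    have := card_sdiff_add_card_eq_card hQM
    omega
  let E := (coreExtensions G M).image (insert · (core G M))
  have hE : ∀ A ∈ E, #A = 1 := by simp [E, hcore]
  have hQE : Q ∉ E := fun h => by have := hE Q h; omega
  have h0E : ∅ ∉ insert Q E := by
    rw [mem_insert, not_or]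
    exact ⟨by rintro rfl; simp at hQcard, fun h => by simpa using hE ∅ h⟩
  have hsum := sum_shortfall_le_two_mul_card_coedges (D := insert ∅ (insert Q E)) hM hG4 hfreq
    (insert_subset h0 (insert_subset hQ image_insert_core_subset))
  rw [sum_insert h0E, sum_insert hQE, sum_image_insert_core, hQcard] at hsum
  simp only [hcore, card_empty, insert_empty_eq, card_singleton, sum_const, smul_eq_mul] at hsum
  have hdeg := two_mul_card_coedges_add_le (M := M) hG
  rw [hcore, sdiff_empty, hM] at hdeg
  omega

theorem inter_nonempty_of_mem_coedges {S : Finset α} (hW : W ∈ coedges G M) (hS : 2 < #(M ∩ S)) :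
    (W ∩ S).Nonempty := by
  rw [nonempty_iff_ne_empty, Ne, ← disjoint_iff_inter_eq_empty]
  intro hdisj
  have hsub : M ∩ S ⊆ M \ W := fun x hx =>
    mem_sdiff.2 ⟨(mem_inter.1 hx).1, disjoint_right.1 hdisj (mem_inter.1 hx).2⟩
  have := card_le_card hsub
  have := (mem_coedges.1 hW).2.2
  omega

theorem exists_nonempty_subset_card_le_two {S : Finset α} (hG : InfClosed (G : Set (Finset α)))
    (hS : S ∈ G) (hS3 : #(M ∩ S) = 3) (hcore : ¬ M ∩ S ⊆ core G M) :
    ∃ Y ∈ G, Y ⊆ S ∧ Y.Nonempty ∧ #Y ≤ 2 := by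
  obtain ⟨x, hxS, hx⟩ := not_subset.1 hcore
  obtain ⟨W, hW, hxW⟩ := exists_coedge_notMem (mem_sdiff.2 ⟨(mem_inter.1 hxS).1, hx⟩)
  have hsub : W ∩ S ⊆ (M ∩ S).erase x := subset_erase.2
    ⟨inter_subset_inter_right (mem_coedges.1 hW).2.1, fun h => hxW (mem_inter.1 h).1⟩
  have hcard := card_le_card hsub
  rw [card_erase_of_mem hxS, hS3] at hcard
  exact ⟨W ∩ S, hG (coedges_subset hW) hS, inter_subset_right,
    inter_nonempty_of_mem_coedges hW (by omega), hcard⟩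

theorem exists_notMem_card_inter_eq_three {a : α} (hG : InfClosed (G : Set (Finset α)))
    (hM : #M = 6) (hG4 : ∀ A ∈ G, #A ≤ 4) (hfreq : ∀ x ∈ M, Frequent G x) (h0 : ∅ ∈ G)
    (hcore : core G M = {a}) : ∃ S ∈ G, a ∉ S ∧ #(M ∩ S) = 3 := by
  have h0E : ∅ ∉ (coreExtensions G M).image (insert · (core G M)) := by simp
  have hinter : ∀ v, #((M \ {a}) ∩ insert v {a}) ≤ 1 := fun v => by
    refine (card_le_card fun x hx => ?_).trans (card_singleton v).le
    simp only [mem_inter, mem_sdiff, mem_insert, mem_singleton] at hx ⊢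
    tauto
  have hlow : #(coreExtensions G M) * 3 ≤
      ∑ v ∈ coreExtensions G M, (6 - 1 - 2 * #((M \ {a}) ∩ insert v {a})) :=
    card_nsmul_le_sum _ _ _ fun v _ => Nat.le_sub_of_add_le (by have := hinter v; omega)
  have hdeg := two_mul_card_coedges_add_le (M := M) hG
  rw [card_sdiff_of_subset core_subset, hM, hcore, card_singleton] at hdeg
  obtain ⟨S, hS, hdisj, hS3⟩ := exists_disjoint_card_inter_eq_three (P := {a}) hM hG4 hfreq
    hcore.ge (by simp) (insert_subset h0 image_insert_core_subset) (by
      rw [sum_insert h0E, sum_image_insert_core, hcore]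
      simp only [inter_empty, card_empty, card_singleton]
      omega)
  exact ⟨S, hS, disjoint_singleton_left.1 hdisj, hS3⟩

theorem core_ne_singleton {a : α} (hG : InfClosed (G : Set (Finset α))) (hM : #M = 6)
    (hG4 : ∀ A ∈ G, #A ≤ 4) (hfreq : ∀ x ∈ M, Frequent G x) (h0 : ∅ ∈ G) :
    core G M ≠ {a} := by
  intro hcore
  have haG : {a} ∈ G := hcore ▸ core_mem hG (coedges_nonempty_of_core_ne (by
    rw [hcore]; rintro rfl; simp at hM))
  obtain ⟨S, hS, haS, hS3⟩ := exists_notMem_card_inter_eq_three hG hM hG4 hfreq h0 hcore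
  obtain ⟨Y, hY, hYS, hY0, hYcard⟩ := exists_nonempty_subset_card_le_two hG hS hS3 fun h => by
    have := card_le_card h
    simp only [hcore, card_singleton, hS3] at this
    omega
  have haY : a ∉ Y := fun h => haS (hYS h)
  let E := (coreExtensions G M).image (insert · (core G M))
  have hE : ∀ A ∈ E, #A = 2 ∧ a ∈ A := fun A hA => by
    obtain ⟨v, hv, rfl⟩ := mem_image.1 hA
    rw [card_insert_of_notMem (mem_sdiff.1 (coreExtensions_subset hv)).2, hcore]
    simp
  have hYE : Y ∉ E := fun h => haY (hE Y h).2
  have haE : {a} ∉ insert Y E := by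
    rw [mem_insert, not_or]
    exact ⟨fun h => haY (h ▸ mem_singleton_self a), fun h => by simpa using (hE _ h).1⟩
  have h0E : ∅ ∉ insert {a} (insert Y E) := by
    simp only [mem_insert, not_or]
    exact ⟨(singleton_ne_empty a).symm, hY0.ne_empty.symm, fun h => by simpa using (hE ∅ h).1⟩
  have hsum := sum_shortfall_le_two_mul_card_coedges (D := insert ∅ (insert {a} (insert Y E)))
    hM hG4 hfreq (insert_subset h0 (insert_subset haG (insert_subset hY image_insert_core_subset)))
  rw [sum_insert h0E, sum_insert haE, sum_insert hYE,
    sum_congr (s₁ := E) rfl fun A hA => by rw [(hE A hA).1], sum_image_insert_core] at hsum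
  simp only [card_empty, card_singleton, sum_const, smul_eq_mul] at hsum
  have hdeg := two_mul_card_coedges_add_le (M := M) hG
  have hext := card_le_card (coreExtensions_subset (G := G) (M := M))
  rw [card_sdiff_of_subset core_subset, hM, hcore, card_singleton] at hdeg hext
  omega

theorem injOn_inter_coedges {S : Finset α} (hPcore : P ⊆ core G M) (hPS : Disjoint P S)
    (hcard : #(M \ S) ≤ #P + 1) : Set.InjOn (· ∩ S) (coedges G M : Set (Finset α)) := by
  intro V hV W hW (hVW : V ∩ S = W ∩ S)
  obtain ⟨-, hVM, hV2⟩ := mem_coedges.1 hV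
  obtain ⟨-, hWM, hW2⟩ := mem_coedges.1 hW
  have hP {A : Finset α} (hA : A ∈ coedges G M) : P ⊆ A \ S :=
    subset_sdiff.2 ⟨hPcore.trans (core_subset_of_mem_coedges hA), hPS⟩
  have hsdiff : V \ S = W \ S := by
    refine eq_of_subset_of_card_eq_of_card_le_succ (hP hV) (hP hW)
      (sdiff_subset_sdiff hVM Subset.rfl) (sdiff_subset_sdiff hWM Subset.rfl) hcard ?_
    have := card_sdiff_add_card_eq_card hVM
    have := card_sdiff_add_card_eq_card hWM
    have := card_sdiff_add_card_inter V S
    have := card_sdiff_add_card_inter W S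
    have := congrArg card hVW
    omega
  rw [← sdiff_union_inter V S, hsdiff, hVW, sdiff_union_inter]

theorem card_core_le_one (hG : InfClosed (G : Set (Finset α))) (hM : #M = 6)
    (hG4 : ∀ A ∈ G, #A ≤ 4) (hfreq : ∀ x ∈ M, Frequent G x) (h0 : ∅ ∈ G) : #(core G M) ≤ 1 := by
  by_contra! hcore
  obtain ⟨P, hPcore, hP2⟩ := exists_subset_card_eq hcore
  obtain ⟨S, hS, hPS, hS3⟩ := exists_disjoint_card_inter_eq_three (D := {∅}) hM hG4 hfreq hPcore
    hP2.le (singleton_subset_iff.2 h0) (by simp [hP2])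
  have hMS := card_sdiff_add_card_inter M S
  have hinj : Set.InjOn (· ∩ S) (coedges G M : Set (Finset α)) :=
    injOn_inter_coedges hPcore hPS (by omega)
  have hsmall : ∀ W ∈ coedges G M, #(W ∩ S) ≤ 2 := fun W hW => by
    obtain ⟨-, hWM, hW2⟩ := mem_coedges.1 hW
    have hsub : W ∩ S ⊆ W \ P := fun x hx =>
      mem_sdiff.2 ⟨(mem_inter.1 hx).1, disjoint_right.1 hPS (mem_inter.1 hx).2⟩
    have := card_le_card hsub
    have := card_sdiff_add_card_eq_card (hPcore.trans (core_subset_of_mem_coedges hW))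
    have := card_sdiff_add_card_eq_card hWM
    omega
  have h0D : ∅ ∉ (coedges G M).image (· ∩ S) := fun h => by
    obtain ⟨W, hW, hWS⟩ := mem_image.1 h
    exact (inter_nonempty_of_mem_coedges hW (by omega)).ne_empty hWS
  have hsum := sum_shortfall_le_two_mul_card_coedges (D := insert ∅ ((coedges G M).image (· ∩ S)))
    hM hG4 hfreq (insert_subset h0 (image_subset_iff.2 fun W hW => hG (coedges_subset hW) hS))
  rw [sum_insert h0D, sum_image hinj, card_empty] at hsum
  have hlow : #(coedges G M) * 2 ≤ ∑ W ∈ coedges G M, (6 - 2 * #(W ∩ S)) :=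
    card_nsmul_le_sum _ _ _ fun W hW => Nat.le_sub_of_add_le (by have := hsmall W hW; omega)
  omega

theorem card_le_five_of_frequent (hG : InfClosed (G : Set (Finset α))) (h0 : ∅ ∈ G)
    (hG4 : ∀ A ∈ G, #A ≤ 4) (hfreq : ∀ x ∈ M, Frequent G x) : #M ≤ 5 := by
  by_contra! hM
  obtain ⟨N, hNM, hN⟩ := exists_subset_card_eq hM
  have hfreqN : ∀ x ∈ N, Frequent G x := fun x hx => hfreq x (hNM hx)
  rcases (card_core_le_one hG hN hG4 hfreqN h0).lt_or_eq with hlt | hone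
  · exact core_ne_empty hG hN hG4 hfreqN (card_eq_zero.1 (by omega))
  · obtain ⟨a, ha⟩ := card_eq_one.1 hone
    exact core_ne_singleton hG hN hG4 hfreqN h0 ha

theorem subset_sup_id {F : Finset (Finset α)} (hA : A ∈ F) : A ⊆ F.sup id :=
  le_sup (f := id) hA

theorem sup_id_mem_of_supClosed {F : Finset (Finset α)} (hF : F.Nonempty)
    (hsup : SupClosed (F : Set (Finset α))) : F.sup id ∈ F := by
  rw [← sup'_eq_sup hF]
  exact sup'_mem (F : Set (Finset α)) (fun _ hA _ hB => hsup hA hB) F hF id fun _ hA => hA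

theorem injOn_sdiff_sup_id (F : Finset (Finset α)) :
    Set.InjOn (F.sup id \ ·) (F : Set (Finset α)) := fun A hA B hB hAB => by
  rw [← Finset.sdiff_sdiff_eq_self (subset_sup_id hA),
    ← Finset.sdiff_sdiff_eq_self (subset_sup_id hB)]
  exact congrArg (F.sup id \ ·) hAB

theorem infClosed_image_sdiff {F : Finset (Finset α)} (hsup : SupClosed (F : Set (Finset α)))
    (X : Finset α) : InfClosed (F.image (X \ ·) : Set (Finset α)) := by
  simp only [coe_image]
  rintro _ ⟨A, hA, rfl⟩ _ ⟨B, hB, rfl⟩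
  exact ⟨A ⊔ B, hsup hA hB, sdiff_sup⟩

theorem frequent_image_sdiff_sup_id {F : Finset (Finset α)} {x : α} (hx : x ∈ F.sup id)
    (hrare : ¬ #F < 2 * #{A ∈ F | x ∈ A}) : Frequent (F.image (F.sup id \ ·)) x := by
  have hcard : #{B ∈ F.image (F.sup id \ ·) | x ∈ B} = #{A ∈ F | x ∉ A} := by
    rw [filter_image, card_image_of_injOn ((injOn_sdiff_sup_id F).mono (filter_subset _ _))]
    simp only [mem_sdiff, hx, true_and]
  have := card_filter_add_card_filter_not (s := F) (x ∈ ·)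
  rw [Frequent, card_image_of_injOn (injOn_sdiff_sup_id F), hcard]
  omega

theorem abundance_k_eq_n_sub_4_general {F : Finset (Finset α)} (hF : F.Nonempty)
    (hUC : SupClosed (F : Set (Finset α))) (h4 : ∀ A ∈ F, #(F.sup id) ≤ #A + 4) :
    #(F.sup id) ≤ #{x ∈ F.sup id | #F < 2 * #{A ∈ F | x ∈ A}} + 5 := by
  have hempty : ∅ ∈ F.image (F.sup id \ ·) :=
    mem_image.2 ⟨F.sup id, sup_id_mem_of_supClosed hF hUC, sdiff_self⟩
  have hcard : ∀ B ∈ F.image (F.sup id \ ·), #B ≤ 4 := forall_mem_image.2 fun A hA => by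
    rw [card_sdiff_of_subset (subset_sup_id hA)]
    exact Nat.sub_le_iff_le_add'.2 (h4 A hA)
  have hrare : #{x ∈ F.sup id | ¬ #F < 2 * #{A ∈ F | x ∈ A}} ≤ 5 :=
    card_le_five_of_frequent (infClosed_image_sdiff hUC _) hempty hcard fun x hx =>
      frequent_image_sdiff_sup_id (mem_filter.1 hx).1 (mem_filter.1 hx).2
  have := card_filter_add_card_filter_not (s := F.sup id) (#F < 2 * #{A ∈ F | · ∈ A})
  omega

end

theorem abundance_k_eq_n_sub_4 (F : Finset (Finset ℕ)) (hF : F.Nonempty)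
    (hUC : UnionClosed F) (hE : (∅ : Finset ℕ) ∉ F) (k n f : ℕ)
    (hk₁ : ∃ S ∈ F, S.card = k) (hk₂ : ∀ A ∈ F, k ≤ A.card)
    (hn : (F.sup id).card = n)
    (hf : ((F.sup id).filter (Abundant F)).card = f)
    (hkn : k = n - 4) :
    f ≥ k - 1 := by
  have hgen : #(F.sup id) ≤ #((F.sup id).filter (Abundant F)) + 5 :=
    abundance_k_eq_n_sub_4_general hF hUC fun A hA => by have := hk₂ A hA; omega
  omega
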